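/- Let σ be a permutation on {1,…,k} and H an arbitrary n×n matrix. (1) For any (k+1)-tensor T on ℝ^n: Diag^σ(T[diag H]) = (Diag^{σ_{(k+1)}} T)[H]. (2) For any k-tensor T on ℝ^n and every l = 1,…,k: Diag^σ(T^{τ_l}[diag H]) = (Diag^{σ_{(l)}} T^{τ_l})[H]. Here diag H = (H^{11},…,H^{nn}) ∈ ℝ^n, and for a 2(k+1)-tensor S viewed as a (k+1)-tensor on matrices, S[H] denotes fixing the last matrix argument to H; both sides are 2k-tensors. -/

import Mathlib

open scoped BigOperators
open Filter Asymptotics Matrix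

attribute [local instance] Matrix.normedAddCommGroup

noncomputable section

/-- A `k`-tensor on `ℝ^n`, identified with its array of entries. -/
abbrev Tensor (k n : ℕ) : Type := (Fin k → Fin n) → ℝ

/-- A `2k`-tensor on `ℝ^n`, with its indices grouped into two groups of `k`. -/
abbrev Tensor2 (k n : ℕ) : Type := (Fin k → Fin n) → (Fin k → Fin n) → ℝ

/-- The `σ`-Hadamard product of `k` matrices:
`(H₁ ∘_σ ⋯ ∘_σ H_k)^{i₁…i_k} = ∏ s, H_s^{i_s i_{σ⁻¹(s)}}`. -/
def hadamardProd {k n : ℕ} (σ : Equiv.Perm (Fin k))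
    (H : Fin k → Matrix (Fin n) (Fin n) ℝ) : Tensor k n :=
  fun i => ∏ s, H s (i s) (i (σ⁻¹ s))

/-- The dot product of two `k`-tensors. -/
def tdot {k n : ℕ} (T₁ T₂ : Tensor k n) : ℝ :=
  ∑ p : Fin k → Fin n, T₁ p * T₂ p

/-- `Diag^σ T`, the `2k`-tensor equal to `T^{i₁…i_k}` when `i_s = j_{σ(s)}` for all `s`,
and `0` otherwise. -/
def diagPerm {k n : ℕ} (σ : Equiv.Perm (Fin k)) (T : Tensor k n) : Tensor2 k n :=
  fun i j => if ∀ s, i s = j (σ s) then T i else 0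

/-- A `2k`-tensor viewed as a `k`-tensor on matrix arguments:
`S[H₁,…,H_k] = ∑_{p,q} S^{p₁…p_k}_{q₁…q_k} ∏ s, H_s^{p_s q_s}`. -/
def apply2 {k n : ℕ} (S : Tensor2 k n)
    (H : Fin k → Matrix (Fin n) (Fin n) ℝ) : ℝ :=
  ∑ p : Fin k → Fin n, ∑ q : Fin k → Fin n, S p q * ∏ s, H s (p s) (q s)

/-- Conjugation `U S Uᵀ` of a `2k`-tensor `S` by a matrix `U`. -/
def conj2 {k n : ℕ} (U : Matrix (Fin n) (Fin n) ℝ) (S : Tensor2 k n) : Tensor2 k n :=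
  fun i j => ∑ p : Fin k → Fin n, ∑ q : Fin k → Fin n,
    S p q * ((∏ s, U (i s) (p s)) * ∏ s, U (j s) (q s))

/-- For a `2(k+1)`-tensor `S` viewed as a `(k+1)`-tensor on matrices, `S[H]` fixes the last
matrix argument to `H`, producing a `2k`-tensor. -/
def lastApply {k n : ℕ} (S : Tensor2 (k+1) n)
    (H : Matrix (Fin n) (Fin n) ℝ) : Tensor2 k n :=
  fun i j => ∑ a : Fin n, ∑ b : Fin n, S (Fin.snoc i a) (Fin.snoc j b) * H a b

/-- `T[x]`: contraction of the last index of a `(k+1)`-tensor against a vector. -/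
def contract {k n : ℕ} (T : Tensor (k+1) n) (x : Fin n → ℝ) : Tensor k n :=
  fun i => ∑ a : Fin n, T (Fin.snoc i a) * x a

/-- A permutation `σ` of `{1,…,k}` viewed as a permutation of `{1,…,k+1}` fixing `k+1`. -/
def extPerm {k : ℕ} (σ : Equiv.Perm (Fin k)) : Equiv.Perm (Fin (k+1)) :=
  (Equiv.permCongr finSuccEquivLast).symm σ.optionCongr

/-- `σ_{(l)} := σ ∘ τ_l`, where `τ_l` is the transposition `(l, k+1)` (and `σ` fixes `k+1`).
Here `l : Fin (k+1)`; taking `l = Fin.last k` gives `σ_{(k+1)} = σ`. -/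
def permIns {k : ℕ} (σ : Equiv.Perm (Fin k)) (l : Fin (k+1)) : Equiv.Perm (Fin (k+1)) :=
  extPerm σ * Equiv.swap l (Fin.last k)

/-- A tensor is `μ`-block-constant if its entries agree on componentwise `μ`-equivalent
multi-indices (`i ∼ j` iff `μ i = μ j`). -/
def BlockConstant {k n : ℕ} (μ : Fin n → ℝ) (T : Tensor k n) : Prop :=
  ∀ i j : Fin k → Fin n, (∀ s, μ (i s) = μ (j s)) → T i = T j

/-- `H_in`: the diagonal-block part of `H` (w.r.t. the blocks of `μ`). -/
def matIn {n : ℕ} (μ : Fin n → ℝ) (H : Matrix (Fin n) (Fin n) ℝ) :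
    Matrix (Fin n) (Fin n) ℝ :=
  Matrix.of fun i j => if μ i = μ j then H i j else 0

/-- `H_out = H - H_in`: the off-diagonal-block part of `H`. -/
def matOut {n : ℕ} (μ : Fin n → ℝ) (H : Matrix (Fin n) (Fin n) ℝ) :
    Matrix (Fin n) (Fin n) ℝ :=
  H - matIn μ H

/-- The divided-difference tensor `T^{(l)}_out` of a `k`-tensor `T`, a `(k+1)`-tensor. -/
def outDD {k n : ℕ} (μ : Fin n → ℝ) (T : Tensor k n) (l : Fin k) : Tensor (k+1) n :=
  fun i => if μ (i l.castSucc) = μ (i (Fin.last k)) then 0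
    else (T (Function.update (fun s => i s.castSucc) l (i (Fin.last k)))
          - T (fun s => i s.castSucc)) / (μ (i (Fin.last k)) - μ (i l.castSucc))

/-- `T^{τ_l}`: the `(k+1)`-tensor equal to `T^{i₁…i_k}` on the hyperplane `i_l = i_{k+1}`
and `0` elsewhere. -/
def liftTau {k n : ℕ} (T : Tensor k n) (l : Fin k) : Tensor (k+1) n :=
  fun i => if i l.castSucc = i (Fin.last k) then T (fun s => i s.castSucc) else 0

/-- `T^{τ_l}_in`: the "inflated" `(k+1)`-tensor, equal to
`T^{i₁…i_{l-1} i_{k+1} i_{l+1}…i_k}` when `μ_{i_l} = μ_{i_{k+1}}` and `0` otherwise. -/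
def liftTauIn {k n : ℕ} (μ : Fin n → ℝ) (T : Tensor k n) (l : Fin k) : Tensor (k+1) n :=
  fun i => if μ (i l.castSucc) = μ (i (Fin.last k))
    then T (Function.update (fun s => i s.castSucc) l (i (Fin.last k))) else 0

/-- `lam` is the map sending each symmetric matrix to the vector of its eigenvalues
ordered nonincreasingly: it is nonincreasing and realized by an orthogonal
diagonalization. -/
def IsEigCF {n : ℕ} (lam : Matrix (Fin n) (Fin n) ℝ → Fin n → ℝ) : Prop :=
  ∀ A : Matrix (Fin n) (Fin n) ℝ, A.IsSymm →
    Antitone (lam A) ∧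
    ∃ U : Matrix (Fin n) (Fin n) ℝ, Uᵀ * U = 1 ∧
      A = U * Matrix.diagonal (lam A) * Uᵀ

/-- `h` is the concatenated vector `(λ(X₁ᵀ A X₁), …, λ(X_rᵀ A X_r))` of the nonincreasingly
ordered eigenvalues of the diagonal blocks of `A` (blocks determined by `μ`):
equivalently, `h` is nonincreasing within each block of `μ` and `Diag h` is obtained from
`A_in` by conjugating with a block-diagonal orthogonal matrix. -/
def IsBlockEig {n : ℕ} (μ : Fin n → ℝ) (A : Matrix (Fin n) (Fin n) ℝ)
    (h : Fin n → ℝ) : Prop :=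
  (∀ i j : Fin n, i ≤ j → μ i = μ j → h j ≤ h i) ∧
  ∃ V : Matrix (Fin n) (Fin n) ℝ, Vᵀ * V = 1 ∧
    (∀ i j, μ i ≠ μ j → V i j = 0) ∧
    Vᵀ * matIn μ A * V = Matrix.diagonal h

theorem extPerm_castSucc' {k : ℕ} (σ : Equiv.Perm (Fin k)) (s : Fin k) :
    extPerm σ s.castSucc = (σ s).castSucc := by
  simp [extPerm, Equiv.permCongr_apply, Equiv.permCongr_symm]

theorem extPerm_last' {k : ℕ} (σ : Equiv.Perm (Fin k)) :
    extPerm σ (Fin.last k) = Fin.last k := by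
  simp [extPerm, Equiv.permCongr_apply, Equiv.permCongr_symm]

theorem part_one {n k : ℕ} (σ : Equiv.Perm (Fin k))
    (H : Matrix (Fin n) (Fin n) ℝ) (T : Tensor (k+1) n) :
    diagPerm σ (contract T (Matrix.diag H)) = lastApply (diagPerm (extPerm σ) T) H := by
  funext i j
  simp only [diagPerm, contract, lastApply, Fin.forall_fin_succ', extPerm_castSucc',
    extPerm_last', Fin.snoc_castSucc, Fin.snoc_last, Matrix.diag_apply]
  by_cases h : ∀ s, i s = j (σ s)
  · simp only [h, implies_true, if_true, true_and, ite_mul, zero_mul, Finset.sum_ite_eq,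
      Finset.mem_univ]
  · simp only [h, if_false, false_and, zero_mul, Finset.sum_const_zero]

theorem diagPerm_permIns {n k : ℕ} (σ : Equiv.Perm (Fin k)) (T : Tensor k n) (l : Fin k) :
    diagPerm (permIns σ l.castSucc) (liftTau T l) = diagPerm (extPerm σ) (liftTau T l) := by
  funext I J
  by_cases h : I l.castSucc = I (Fin.last k)
  · have hs : ∀ s, I (Equiv.swap l.castSucc (Fin.last k) s) = I s := by
      intro s
      rw [Equiv.swap_apply_def]
      split_ifs with h1 h2
      · rw [h1, h]
      · rw [h2, h]
      · rfl
    have : (∀ s, I s = J (permIns σ l.castSucc s)) ↔ ∀ s, I s = J (extPerm σ s) := by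
      constructor
      · intro H s
        have := H (Equiv.swap l.castSucc (Fin.last k) s)
        rw [hs] at this
        simpa [permIns] using this
      · intro H s
        have := H (Equiv.swap l.castSucc (Fin.last k) s)
        rw [hs] at this
        simpa [permIns] using this
    simp only [diagPerm, this]
  · simp [diagPerm, liftTau, h]

/-- Corollary `jan11abc`. Let `σ` be a permutation of `{1,…,k}` and
`H` an arbitrary matrix. (1) For any `(k+1)`-tensor `T`:
`Diag^σ(T[diag H]) = (Diag^{σ_{(k+1)}} T)[H]`. (2) For any `k`-tensor `T` and every
`l ∈ {1,…,k}`: `Diag^σ(T^{τ_l}[diag H]) = (Diag^{σ_{(l)}} T^{τ_l})[H]`. -/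
theorem statement15 {n k : ℕ} (σ : Equiv.Perm (Fin k))
    (H : Matrix (Fin n) (Fin n) ℝ) :
    (∀ T : Tensor (k+1) n,
        diagPerm σ (contract T (Matrix.diag H)) = lastApply (diagPerm (extPerm σ) T) H) ∧
    (∀ (T : Tensor k n) (l : Fin k),
        diagPerm σ (contract (liftTau T l) (Matrix.diag H))
          = lastApply (diagPerm (permIns σ l.castSucc) (liftTau T l)) H) := by
  refine ⟨part_one σ H, fun T l => ?_⟩
  rw [diagPerm_permIns]
  exact part_one σ H _

end
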